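/- arXiv:1206.0585 — 2 statements merged into one kernel-verified Lean document; each statement's English description precedes it below -/
import Mathlib

section
/- If f : X → X is a non-surjective function on a finite set X, then f can be written as a composition f = f_n ∘ ⋯ ∘ f_1 of idempotent functions f_i : X → X (i.e., functions with f_i ∘ f_i = f_i). -/
/-!
A transformation moving only finitely many points is a product of transpositions and of *collapses*
`a ↦ b`, which fix every point other than `a`. A collapse with `a ≠ b` is a non-surjective
idempotent. A transposition is not a product of idempotents, but after a map `g` that misses a
point `h` it acts as one: `h` is a free slot, and `x`, `y` are interchanged by the collapses
`x ↦ h`, `y ↦ x`, `h ↦ y` in turn, as in a sliding puzzle. Hence if `g` is a non-surjective product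
of idempotents and `f` moves only finitely many points, then `f ∘ g` is a product of idempotents. If
`f` itself is not surjective, it is not injective either, say `f a = f b` with `a ≠ b`, and then
`f = f ∘ g` for the collapse `g` sending `a` to `b`.
-/

open Equiv
open Function hiding swap

/-- The submonoid of all products of idempotents in the full transformation monoid of `X`. -/
def idempotentClosure (X : Type*) : Submonoid (Function.End X) :=
  Submonoid.closure {g | IsIdempotentElem g}

section

variable {X : Type*}

theorem surjective_of_injective_of_finite_compl_fixedPoints {f : X → X}
    (hfin : (fixedPoints f)ᶜ.Finite) (hf : Injective f) : Surjective f := by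
  have hmaps : Set.MapsTo f (fixedPoints f)ᶜ (fixedPoints f)ᶜ :=
    fun _ hx hfx ↦ hx (hf hfx)
  have hbij := (hfin.injOn_iff_bijOn_of_mapsTo hmaps).1 hf.injOn
  intro y
  by_cases hy : f y = y
  · exact ⟨y, hy⟩
  · obtain ⟨x, -, hx⟩ := hbij.surjOn hy
    exact ⟨x, hx⟩

section Collapse

variable [DecidableEq X]

/-- The idempotent transformation that sends `a` to `b` and fixes every other point; together with
the transpositions, these generate all transformations moving finitely many points. -/
def collapse (a b : X) : X → X := update id a b

theorem collapse_apply (a b x : X) : collapse a b x = if x = a then b else x :=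
  update_apply id a b x

theorem collapse_comp_self (a b : X) : collapse a b ∘ collapse a b = collapse a b := by
  grind [collapse_apply]

theorem collapse_mem_idempotentClosure (a b : X) : collapse a b ∈ idempotentClosure X :=
  Submonoid.subset_closure (collapse_comp_self a b)

theorem collapse_comp_mem_idempotentClosure (a b : X) {g : X → X} (hg : g ∈ idempotentClosure X) :
    collapse a b ∘ g ∈ idempotentClosure X :=
  (idempotentClosure X).mul_mem (collapse_mem_idempotentClosure a b) hg

theorem not_surjective_collapse {a b : X} (hab : a ≠ b) : ¬ Surjective (collapse a b) := by
  intro h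
  obtain ⟨x, hx⟩ := h a
  grind [collapse_apply]

theorem comp_collapse_of_apply_eq {Y : Type*} {f : X → Y} {a b : X} (h : f a = f b) :
    f ∘ collapse a b = f := by
  grind [collapse_apply]

theorem swap_comp_eq_collapse_comp {Y : Type*} {g : Y → X} {x y : X} (hy : y ∉ Set.range g) :
    swap x y ∘ g = collapse x y ∘ g := by
  grind [collapse_apply]

theorem swap_comp_eq_comp_three_collapses {Y : Type*} {g : Y → X} {h x y : X}
    (hh : h ∉ Set.range g) (hx : x ≠ h) (hy : y ≠ h) :
    swap x y ∘ g = collapse h y ∘ collapse y x ∘ collapse x h ∘ g := by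
  grind [collapse_apply]

theorem swap_comp_mem_idempotentClosure {g : X → X} (hg : g ∈ idempotentClosure X)
    (hns : ¬ Surjective g) (x y : X) : swap x y ∘ g ∈ idempotentClosure X := by
  obtain ⟨h, hh⟩ : ∃ h, h ∉ Set.range g := by simpa [Surjective] using hns
  obtain rfl | hx := eq_or_ne x h
  · rw [swap_comm, swap_comp_eq_collapse_comp hh]
    exact collapse_comp_mem_idempotentClosure _ _ hg
  obtain rfl | hy := eq_or_ne y h
  · rw [swap_comp_eq_collapse_comp hh]
    exact collapse_comp_mem_idempotentClosure _ _ hg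
  rw [swap_comp_eq_comp_three_collapses hh hx hy]
  iterate 3 apply collapse_comp_mem_idempotentClosure
  exact hg

theorem exists_comp_swap_or_comp_collapse {f : X → X} {a : X} (ha : f a ≠ a) :
    ∃ f' : X → X, fixedPoints f ⊂ fixedPoints f' ∧
      (f = f' ∘ swap a (f a) ∨ f = f' ∘ collapse a (f a)) := by
  by_cases hfa : f (f a) = f a
  · have hsub : fixedPoints f ⊆ fixedPoints (update f a a) := by
      grind [mem_fixedPoints, IsFixedPt]
    have hfix : a ∈ fixedPoints (update f a a) := by
      rw [mem_fixedPoints, IsFixedPt, update_self]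
    have hcomp : f = update f a a ∘ collapse a (f a) := by grind [collapse_apply]
    exact ⟨_, (Set.ssubset_iff_of_subset hsub).2 ⟨a, hfix, ha⟩, .inr hcomp⟩
  · have hsub : fixedPoints f ⊆ fixedPoints (f ∘ swap a (f a)) := by
      grind [mem_fixedPoints, IsFixedPt]
    have hfix : f a ∈ fixedPoints (f ∘ swap a (f a)) :=
      congrArg f (swap_apply_right a (f a))
    have hcomp : f = (f ∘ swap a (f a)) ∘ swap a (f a) :=
      funext fun x ↦ congrArg f (swap_apply_self a (f a) x).symm
    exact ⟨_, (Set.ssubset_iff_of_subset hsub).2 ⟨f a, hfix, hfa⟩, .inl hcomp⟩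

end Collapse

theorem comp_mem_idempotentClosure_of_not_surjective {f g : X → X}
    (hfin : (fixedPoints f)ᶜ.Finite) (hg : g ∈ idempotentClosure X) (hns : ¬ Surjective g) :
    f ∘ g ∈ idempotentClosure X := by
  classical
  induction hn : (fixedPoints f)ᶜ.ncard using Nat.strong_induction_on generalizing f g with
  | _ n ih =>
    subst hn
    by_cases hid : ∀ a, f a = a
    · obtain rfl : f = id := funext hid
      exact hg
    push Not at hid
    obtain ⟨a, ha⟩ := hid
    obtain ⟨f', hlt, hf'⟩ := exists_comp_swap_or_comp_collapse ha
    have hcompl : (fixedPoints f')ᶜ ⊂ (fixedPoints f)ᶜ := compl_lt_compl_iff_lt.2 hlt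
    have comp_mem {k : X → X} (hk : k ∈ idempotentClosure X) (hns : ¬ Surjective k) :
        f' ∘ k ∈ idempotentClosure X :=
      ih _ (Set.ncard_lt_ncard hcompl hfin) (hfin.subset hcompl.subset) hk hns rfl
    obtain hf' | hf' := hf' <;> rw [hf', comp_assoc]
    · exact comp_mem (swap_comp_mem_idempotentClosure hg hns a (f a)) (by simpa using hns)
    · exact comp_mem (collapse_comp_mem_idempotentClosure a (f a) hg)
        fun h ↦ not_surjective_collapse ha.symm h.of_comp

end

theorem stmt_0_general {X : Type*} (f : X → X) (hfin : (fixedPoints f)ᶜ.Finite)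
    (hf : ¬ Surjective f) :
    ∃ l : List (X → X), (∀ g ∈ l, g ∘ g = g) ∧ l.foldr (· ∘ ·) id = f := by
  classical
  obtain ⟨a, b, hfab, hab⟩ : ∃ a b, f a = f b ∧ a ≠ b := not_injective_iff.1 fun hinj ↦
    hf (surjective_of_injective_of_finite_compl_fixedPoints hfin hinj)
  have hmem : f ∈ idempotentClosure X := by
    rw [← comp_collapse_of_apply_eq hfab]
    exact comp_mem_idempotentClosure_of_not_surjective hfin (collapse_mem_idempotentClosure a b)
      (not_surjective_collapse hab)
  exact Submonoid.exists_list_of_mem_closure (M := Function.End X) hmem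

/-- A non-surjective function on a finite set is a composition of idempotents. -/
theorem stmt_0 {X : Type*} [Finite X] (f : X → X) (hf : ¬ Function.Surjective f) :
    ∃ l : List (X → X), (∀ g ∈ l, g ∘ g = g) ∧ l.foldr (· ∘ ·) id = f :=
  stmt_0_general f (Set.toFinite _) hf
end

section
/- Let F : S^ℤ → S^ℤ be a cellular automaton that is not preinjective. Then F is not surjective (Moore's direction of the Garden of Eden theorem). -/
/-! Suppose `F x = F y`, where `x` and `y` differ only well inside a window of length `L`, and let
`p ≠ q` be the words they spell on that window. Cut configurations into blocks of length `L`.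
Since `F` is local, replacing a block `p` by `q` in any configuration does not change its image, so
every point of the image of `F` has a preimage without the block `p`. If `F` were surjective, all
`|S| ^ (L * k)` words made of `k` blocks would be determined by `k + 2` blocks drawn from only
`|S| ^ L - 1` possibilities, which is impossible for large `k`. -/

open Function Set SymbolicDynamics.FullShift

section Coordinates

variable {ι κ A B : Type*}

lemma exists_finset_dependsOn_of_continuous {X : ι → Type*} [∀ i, TopologicalSpace (X i)]
    [CompactSpace (∀ i, X i)] [TopologicalSpace B] [DiscreteTopology B] {f : (∀ i, X i) → B}
    (hf : Continuous f) : ∃ s : Finset ι, DependsOn f s := by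
  classical
  have hcyl : ∀ z, ∃ (I : Finset ι) (u : ∀ i, Set (X i)),
      (∀ i ∈ I, IsOpen (u i) ∧ z i ∈ u i) ∧ (I : Set ι).pi u ⊆ f ⁻¹' {f z} :=
    fun z ↦ isOpen_pi_iff.1 ((isOpen_discrete {f z}).preimage hf) z rfl
  choose I u hu hconst using hcyl
  obtain ⟨t, ht⟩ := CompactSpace.elim_nhds_subcover (fun z ↦ (I z : Set ι).pi (u z))
    fun z ↦ set_pi_mem_nhds (I z).finite_toSet fun i hi ↦ (hu z i hi).1.mem_nhds (hu z i hi).2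
  refine ⟨t.biUnion I, fun v w hvw ↦ ?_⟩
  obtain ⟨z, hz, hv⟩ := mem_iUnion₂.1 (ht.ge (mem_univ v))
  have hw : w ∈ (I z : Set ι).pi (u z) := fun i hi ↦
    hvw i (Finset.mem_biUnion.2 ⟨z, hz, hi⟩) ▸ hv i hi
  exact (hconst z hv).trans (hconst z hw).symm

lemma card_pow_le_of_surjective_of_dependsOn [Finite A] [Nonempty B] {F : (ι → A) → (κ → B)}
    (hF : Surjective F) {s : Finset κ} {t : Finset ι}
    (hdep : ∀ j ∈ s, DependsOn (fun z ↦ F z j) (t : Set ι)) :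
    Nat.card B ^ s.card ≤ Nat.card A ^ t.card := by
  have hsurj : ∀ v : s → B, ∃ z, s.restrict (F z) = v := fun v ↦ by
    obtain ⟨w, rfl⟩ := Subtype.val_injective.surjective_comp_right v
    exact (hF w).imp fun z hz ↦ by rw [hz]; rfl
  choose g hg using hsurj
  have hinj : Injective fun v ↦ t.restrict (g v) := fun v w hvw ↦ by
    rw [← hg v, ← hg w]
    exact funext fun j ↦ hdep j j.2 fun i hi ↦ congrFun hvw ⟨i, hi⟩
  simpa [Nat.card_fun] using Nat.card_le_card_of_injective _ hinj

/-- Two symbols `p` and `q` are interchangeable for a map `F` on configurations if rewriting one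
occurrence of `p` as `q` never changes the value of `F`. -/
def Interchangeable [DecidableEq ι] (F : (ι → A) → B) (p q : A) : Prop :=
  ∀ (w : ι → A) (b : ι), w b = p → F (update w b q) = F w

namespace Interchangeable

variable [DecidableEq ι] {p q : A}

lemma apply_ite_eq [DecidableEq A] {f : (ι → A) → B} (h : Interchangeable f p q) {s : Finset ι}
    (hdep : DependsOn f (s : Set ι)) (w : ι → A) :
    f (fun i ↦ if w i = p then q else w i) = f w := by
  set w' : ι → A := fun i ↦ if w i = p then q else w i
  have hpiecewise (t : Finset ι) : f (t.piecewise w' w) = f w := by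
    induction t using Finset.induction_on with
    | empty => simp
    | insert b t hb ih =>
      rw [Finset.piecewise_insert, ← ih]
      have hcur : t.piecewise w' w b = w b := Finset.piecewise_eq_of_notMem _ _ _ hb
      by_cases hp : w b = p
      · rw [show w' b = q from if_pos hp]
        exact h _ b (hcur.trans hp)
      · rw [show w' b = t.piecewise w' w b from (if_neg hp).trans hcur.symm, update_eq_self]
  rw [← hpiecewise s]
  exact hdep fun i hi ↦ (Finset.piecewise_eq_of_mem _ _ _ hi).symm

lemma surjective_restrict_ne {F : (ι → A) → (κ → B)} (h : Interchangeable F p q) (hpq : p ≠ q)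
    (hdep : ∀ j, ∃ s : Finset ι, DependsOn (fun z ↦ F z j) (s : Set ι)) (hF : Surjective F) :
    Surjective fun w : ι → {a // a ≠ p} ↦ F fun i ↦ w i := by
  classical
  intro v
  obtain ⟨w, rfl⟩ := hF v
  refine ⟨fun i ↦ ⟨if w i = p then q else w i, ?_⟩, funext fun j ↦ ?_⟩
  · split_ifs with hp
    exacts [hpq.symm, hp]
  · obtain ⟨s, hs⟩ := hdep j
    exact apply_ite_eq (fun w b hb ↦ congrFun (h w b hb) j) hs w

end Interchangeable

end Coordinates

lemma exists_mul_pow_lt_pow {a b : ℕ} (hab : a < b) (c : ℕ) : ∃ k, c * a ^ k < b ^ k := by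
  have hb : (0 : ℝ) < b := mod_cast Nat.zero_lt_of_lt hab
  have hratio : (a / b : ℝ) < 1 := (div_lt_one hb).2 (mod_cast hab)
  obtain ⟨k, hk⟩ := exists_pow_lt_of_lt_one (Nat.one_div_pos_of_nat (n := c)) hratio
  refine ⟨k, ?_⟩
  rw [div_pow, div_lt_div_iff₀ (by positivity) (by positivity), one_mul] at hk
  have hk' : a ^ k * (c + 1) < b ^ k := mod_cast hk
  lia

section Shift

variable {S T : Type*} {F : (ℤ → S) → (ℤ → T)}

lemma semiconj_shift_of_semiconj_shift_one (h : Semiconj F (shift (1 : ℤ)) (shift 1)) (c : ℤ) :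
    Semiconj F (shift c) (shift c) := by
  have hneg : Semiconj F (shift (-1 : ℤ)) (shift (-1)) := fun z ↦ by
    have := h (shift (-1) z)
    rw [← shift_add, neg_add_cancel, shift_zero] at this
    rw [this, ← shift_add, add_neg_cancel, shift_zero]
  induction c using Int.induction_on with
  | zero => intro z; simp only [shift_zero]
  | succ k ih => intro z; rw [shift_add, h, ih, ← shift_add]
  | pred k ih => intro z; rw [sub_eq_add_neg, shift_add, hneg, ih, ← shift_add]

/-- `F` is local with radius `r`: the output at `n` depends only on the inputs at distance at most
`r` from `n`. Unlike for cellular automata, the local rule may vary with `n`. -/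
def HasRadius (F : (ℤ → S) → (ℤ → T)) (r : ℕ) : Prop :=
  ∀ n : ℤ, DependsOn (fun z ↦ F z n) (Icc (n - r) (n + r))

lemma exists_hasRadius_of_continuous [TopologicalSpace S] [CompactSpace S]
    [TopologicalSpace T] [DiscreteTopology T] (hcont : Continuous F)
    (hcomm : ∀ c : ℤ, Semiconj F (shift c) (shift c)) : ∃ r, HasRadius F r := by
  obtain ⟨s, hs⟩ := exists_finset_dependsOn_of_continuous ((continuous_apply (0 : ℤ)).comp hcont)
  refine ⟨s.sup Int.natAbs, fun n v w hvw ↦ ?_⟩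
  have hshift : F (shift n v) 0 = F (shift n w) 0 := hs fun i hi ↦ hvw _ <| by
    have : i.natAbs ≤ s.sup Int.natAbs := Finset.le_sup hi
    constructor <;> lia
  simpa only [hcomm n _, shift_apply, add_zero] using hshift

end Shift

namespace HasRadius

variable {S T : Type*} {F : (ℤ → S) → (ℤ → T)} {r : ℕ}

lemma exists_finset_dependsOn (hF : HasRadius F r) (n : ℤ) :
    ∃ s : Finset ℤ, DependsOn (fun z ↦ F z n) (s : Set ℤ) :=
  ⟨Finset.Icc (n - r) (n + r), by simpa only [Finset.coe_Icc] using hF n⟩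

lemma comp_map {A : Type*} (hF : HasRadius F r) (g : A → S) :
    HasRadius (fun w : ℤ → A ↦ F fun i ↦ g (w i)) r :=
  fun n _ _ h ↦ hF n fun i hi ↦ congrArg g (h i hi)

lemma not_surjective_of_card_lt [Finite S] (hF : HasRadius F r)
    (hcard : Nat.card S < Nat.card T) : ¬ Surjective F := by
  intro hsurj
  have : Nonempty T := (Nat.card_pos_iff.1 (Nat.zero_lt_of_lt hcard)).1
  have hle (k : ℕ) : Nat.card T ^ k ≤ Nat.card S ^ (2 * r) * Nat.card S ^ k := by
    have := card_pow_le_of_surjective_of_dependsOn hsurj (s := Finset.Ico 0 (k : ℤ))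
      (t := Finset.Ico (-r : ℤ) (k + r)) fun n hn ↦ (hF n).mono fun i hi ↦ by
        simp only [Finset.mem_Ico, Finset.coe_Ico, mem_Icc, mem_Ico] at *
        lia
    rwa [Int.card_Ico, Int.card_Ico, show ((k : ℤ) - 0).toNat = k by lia,
      show ((k : ℤ) + r - -r).toNat = 2 * r + k by lia, pow_add] at this
  obtain ⟨k, hk⟩ := exists_mul_pow_lt_pow hcard (Nat.card S ^ (2 * r))
  exact (hle k).not_gt hk

/-- An output that depends on the core of the window, where `x` and `y` may differ, depends only on
the window; for every other output `z` and `z'` agree on all relevant inputs. -/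
lemma apply_eq_of_eqOn_window (hF : HasRadius F r) {x y z z' : ℤ → S} {a b : ℤ} (hFxy : F x = F y)
    (hxy : EqOn x y (Ico (a + 2 * r) (b - 2 * r))ᶜ) (hzx : EqOn z x (Ico a b))
    (hzy : EqOn z' y (Ico a b)) (hzz : EqOn z z' (Ico a b)ᶜ) : F z = F z' := by
  funext n
  by_cases hn : n ∈ Ico (a + r) (b - r)
  · have hwindow : Icc (n - r) (n + r) ⊆ Ico a b := fun i hi ↦ by
      simp only [mem_Icc, mem_Ico] at *
      lia
    calc F z n = F x n := hF n fun i hi ↦ hzx (hwindow hi)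
      _ = F y n := congrFun hFxy n
      _ = F z' n := hF n fun i hi ↦ (hzy (hwindow hi)).symm
  · refine hF n fun i hi ↦ ?_
    by_cases hi' : i ∈ Ico a b
    · have hcore : i ∈ (Ico (a + 2 * r) (b - 2 * r))ᶜ := by
        simp only [mem_Icc, mem_Ico, mem_compl_iff] at *
        lia
      rw [hzx hi', hxy hcore, hzy hi']
    · exact hzz hi'

end HasRadius

section Blocks

variable {S T : Type*} (L : ℕ) [NeZero L]

/-- The recoding of configurations by consecutive blocks of length `L`; block number `b` occupies
the positions `b * L, …, b * L + L - 1`. -/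
def blockEquiv (S : Type*) : (ℤ → S) ≃ (ℤ → Fin L → S) :=
  ((Int.divModEquiv L).arrowCongr (Equiv.refl S)).trans (Equiv.curry ℤ (Fin L) S)

variable {L}

lemma blockEquiv_apply (z : ℤ → S) (b : ℤ) (i : Fin L) :
    blockEquiv L S z b i = z (b * L + i) := rfl

lemma blockEquiv_shift (z : ℤ → S) (b c : ℤ) :
    blockEquiv L S (shift (c * L) z) b = blockEquiv L S z (c + b) := by
  funext i
  simp only [blockEquiv_apply, shift_apply]
  congr 1
  ring

lemma blockEquiv_apply_eq_iff {z z' : ℤ → S} {b : ℤ} :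
    blockEquiv L S z b = blockEquiv L S z' b ↔ EqOn z z' (Ico (b * L) (b * L + L)) := by
  constructor
  · rintro h n ⟨hlow, hhigh⟩
    obtain ⟨i, rfl⟩ : ∃ i : Fin L, n = b * L + i :=
      ⟨⟨(n - b * L).toNat, by lia⟩, by dsimp only; lia⟩
    exact congrFun h i
  · intro h
    funext i
    rw [blockEquiv_apply, blockEquiv_apply]
    have hi := i.isLt
    exact h ⟨by lia, by lia⟩

variable (L) in
lemma mem_Ico_ediv_mul (n : ℤ) : n ∈ Ico (n / L * L) (n / L * L + L) := by
  have hL : (0 : ℤ) < L := mod_cast NeZero.pos L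
  have := Int.ediv_mul_add_emod n L
  have := Int.emod_nonneg n hL.ne'
  have := Int.emod_lt_of_pos n hL
  constructor <;> lia

lemma HasRadius.conj_blockEquiv {F : (ℤ → S) → (ℤ → T)} {r m : ℕ} (hF : HasRadius F r)
    (hr : r ≤ m * L) : HasRadius (blockEquiv L T ∘ F ∘ (blockEquiv L S).symm) m := by
  intro b v w hvw
  refine funext fun i ↦ hF (b * L + i) fun n ⟨hn_low, hn_high⟩ ↦ ?_
  have hL : (0 : ℤ) < L := mod_cast NeZero.pos L
  zify at hr
  have hlow : b - m ≤ n / L := (Int.le_ediv_iff_mul_le hL).2 <| by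
    linarith [Int.natCast_nonneg i]
  have hhigh : n / L < b + m + 1 := (Int.ediv_lt_iff_lt_mul hL).2 <| by
    linarith [show (i : ℤ) < L from mod_cast i.isLt]
  refine blockEquiv_apply_eq_iff.1 ?_ (mem_Ico_ediv_mul L n)
  simpa only [Equiv.apply_symm_apply] using hvw _ ⟨hlow, by lia⟩

lemma HasRadius.interchangeable_blocks {F : (ℤ → S) → (ℤ → T)} {r : ℕ} (hF : HasRadius F r)
    (hcomm : ∀ c : ℤ, Semiconj F (shift c) (shift c)) {x y : ℤ → S} (hFxy : F x = F y)
    (hxy : EqOn x y (Ico (2 * r) (L - 2 * r) : Set ℤ)ᶜ) :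
    Interchangeable (F ∘ (blockEquiv L S).symm) (blockEquiv L S x 0) (blockEquiv L S y 0) := by
  intro w b hb
  have hshift (u : ℤ → S) : blockEquiv L S (shift (-b * L) u) b = blockEquiv L S u 0 := by
    rw [blockEquiv_shift, neg_add_cancel]
  refine (hF.apply_eq_of_eqOn_window (x := shift (-b * L) x) (y := shift (-b * L) y)
    (a := b * L) (b := b * L + L) ?_ ?_ ?_ ?_ ?_).symm
  · rw [hcomm, hcomm, hFxy]
  · intro n hn
    refine hxy ?_
    simp only [mem_Ico, mem_compl_iff] at *
    lia
  · rw [← blockEquiv_apply_eq_iff, hshift, Equiv.apply_symm_apply, hb]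
  · rw [← blockEquiv_apply_eq_iff, hshift, Equiv.apply_symm_apply, update_self]
  · intro n hn
    have hne : n / L ≠ b := by
      rintro rfl
      exact hn (mem_Ico_ediv_mul L n)
    refine blockEquiv_apply_eq_iff.1 ?_ (mem_Ico_ediv_mul L n)
    rw [Equiv.apply_symm_apply, Equiv.apply_symm_apply, update_of_ne hne]

end Blocks

section Moore

variable {S T : Type*} {F : (ℤ → S) → (ℤ → T)}

lemma exists_eqOn_compl_core {x y : ℤ → S}
    (hcomm : ∀ c : ℤ, Semiconj F (shift c) (shift c)) (hxy : x ≠ y)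
    (hfin : {j : ℤ | x j ≠ y j}.Finite) (hF : F x = F y) (r : ℕ) :
    ∃ (L : ℕ) (x' y' : ℤ → S), x' ≠ y' ∧ F x' = F y' ∧
      EqOn x' y' (Ico (2 * r) (L - 2 * r) : Set ℤ)ᶜ := by
  obtain ⟨a, ha⟩ := hfin.bddBelow
  obtain ⟨b, hb⟩ := hfin.bddAbove
  refine ⟨(b - a + 4 * r + 1).toNat, shift (a - 2 * r) x, shift (a - 2 * r) y, ?_, ?_, ?_⟩
  · obtain ⟨j, hj⟩ := ne_iff.1 hxy
    exact ne_iff.2 ⟨j - (a - 2 * r), by simpa using hj⟩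
  · rw [hcomm, hcomm, hF]
  · intro n hn
    by_contra hne
    have := ha hne
    have := hb hne
    refine hn ⟨?_, ?_⟩ <;> lia

theorem HasRadius.not_surjective_of_eqOn_compl_core [Finite S] {r L : ℕ} (hF : HasRadius F r)
    (hcomm : ∀ c : ℤ, Semiconj F (shift c) (shift c)) (hcard : Nat.card S ≤ Nat.card T)
    {x y : ℤ → S} (hne : x ≠ y) (hFxy : F x = F y)
    (hxy : EqOn x y (Ico (2 * r) (L - 2 * r) : Set ℤ)ᶜ) : ¬ Surjective F := by
  intro hsurj
  obtain ⟨j, hj⟩ := ne_iff.1 hne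
  obtain ⟨hj0, hjL⟩ : 2 * (r : ℤ) ≤ j ∧ j < L - 2 * r := not_not.1 fun h ↦ hj (hxy h)
  have : NeZero L := ⟨by lia⟩
  set p := blockEquiv L S x 0
  set q := blockEquiv L S y 0
  have hpq : p ≠ q := fun h ↦ hj (blockEquiv_apply_eq_iff.1 h ⟨by lia, by lia⟩)
  set G := blockEquiv L T ∘ F ∘ (blockEquiv L S).symm
  have hG : HasRadius G 1 := hF.conj_blockEquiv (by lia)
  have hGsurj : Surjective G :=
    (blockEquiv L T).surjective.comp (hsurj.comp (blockEquiv L S).symm.surjective)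
  have hGpq : Interchangeable G p q := fun w b hb ↦
    congrArg (blockEquiv L T) (hF.interchangeable_blocks hcomm hFxy hxy w b hb)
  have hlt : Nat.card {u : Fin L → S // u ≠ p} < Nat.card (Fin L → T) :=
    calc Nat.card {u : Fin L → S // u ≠ p} < Nat.card (Fin L → S) :=
          Finite.card_subtype_lt (not_not.2 rfl)
      _ ≤ Nat.card (Fin L → T) := by
          simpa only [Nat.card_fun] using Nat.pow_le_pow_left hcard _
  exact (hG.comp_map Subtype.val).not_surjective_of_card_lt hlt
    (hGpq.surjective_restrict_ne hpq hG.exists_finset_dependsOn hGsurj)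

theorem stmt_15_general [Finite S] [TopologicalSpace S] [TopologicalSpace T] [DiscreteTopology T]
    (hcard : Nat.card S ≤ Nat.card T) (hcont : Continuous F)
    (hcomm : Semiconj F (shift (1 : ℤ)) (shift 1)) {x y : ℤ → S} (hxy : x ≠ y)
    (hfin : {j : ℤ | x j ≠ y j}.Finite) (hF : F x = F y) : ¬ Surjective F := by
  have hcomm' := semiconj_shift_of_semiconj_shift_one hcomm
  obtain ⟨r, hr⟩ := exists_hasRadius_of_continuous hcont hcomm'
  obtain ⟨L, x', y', hne, hFxy, hcore⟩ := exists_eqOn_compl_core hcomm' hxy hfin hF r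
  exact hr.not_surjective_of_eqOn_compl_core hcomm' hcard hne hFxy hcore

end Moore

/-- Moore's direction of the Garden of Eden theorem: a non-preinjective cellular automaton
on the full shift is not surjective. -/
theorem stmt_15 {S : Type*} [Fintype S] [TopologicalSpace S] [DiscreteTopology S]
    (σ : (ℤ → S) → (ℤ → S)) (hσ : ∀ x i, σ x i = x (i + 1))
    (F : (ℤ → S) → (ℤ → S)) (hcont : Continuous F) (hcomm : F ∘ σ = σ ∘ F)
    (x y : ℤ → S) (hxy : x ≠ y) (hfin : {j : ℤ | x j ≠ y j}.Finite)
    (hF : F x = F y) :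
    ¬ Function.Surjective F := by
  obtain rfl : σ = shift 1 := funext₂ fun z i ↦ by rw [hσ, shift_apply, add_comm]
  exact stmt_15_general le_rfl hcont (congrFun hcomm) hxy hfin hF
end
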